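/- Let M be a finitely generated ℤ-graded R-module of Krull dimension d. For every nonnegative integer m the limit a_m = ((-i)^m/m!) · lim_{n→∞} p^{-n(d+m)} Σ_{j∈ℤ} j^m λ_k((M/I^{[p^n]}M)_j) exists, and the power series expansion of the Frobenius–Poincaré function around the origin is F(M,R,I)(y) = Σ_{m=0}^{∞} a_m y^m. -/

import Mathlib

open Filter Complex

noncomputable section

/-- The Frobenius bracket power `I^{[q]}` of an ideal. -/
def bracketPow {R : Type*} [CommSemiring R] (I : Ideal R) (q : ℕ) : Ideal R :=
  Ideal.span ((fun x : R => x ^ q) '' (I : Set R))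

/-- `λ_k((M/N)_j)`. -/
def quotPieceDim (k : Type*) {R M : Type*} [Field k] [CommRing R] [Algebra k R]
    [AddCommGroup M] [Module R M] [Module k M] [IsScalarTower k R M]
    (ℳ : ℤ → Submodule k M) (N : Submodule R M) (j : ℤ) : ℕ :=
  Module.finrank k ((ℳ j).map (N.mkQ.restrictScalars k))

/-- `F_n(M,R,I,d)(y)`. -/
def FnGen (k : Type*) {R M : Type*} [Field k] [CommRing R] [Algebra k R]
    [AddCommGroup M] [Module R M] [Module k M] [IsScalarTower k R M]
    (ℳ : ℤ → Submodule k M) (I : Ideal R) (p d n : ℕ) (y : ℂ) : ℂ :=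
  (1 / (p : ℂ) ^ n) ^ d *
    ∑' j : ℤ, (quotPieceDim k (R := R) ℳ (bracketPow I (p ^ n) • ⊤) j : ℂ) *
      Complex.exp (-Complex.I * y * (j : ℂ) / (p : ℂ) ^ n)

/-!
By definition `F_n(y)` is the moment generating function, evaluated at `-iy`, of the discrete
measure `p^{-nd} Σ_j λ_k((M/I^{[p^n]}M)_j) δ_{j/p^n}` on the line, and the rescaled power sums in
the theorem are the moments of this measure. Since the measure is positive, `|F_n|` is bounded on a
horizontal strip by the sum of two values of `F_n` on the imaginary axis, which stay bounded because
`F_n` converges there. Hence the entire functions `F_n` are locally uniformly bounded, so by the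
Schwarz lemma they are equicontinuous and converge to `F` locally uniformly. Therefore `F` is entire
and all derivatives at the origin, that is, all moments up to powers of `-i`, converge to those
of `F`.

The measures have finite support because `M/I^{[q]}M` is a finite-dimensional `k`-vector space: `I`
lies in the radical of `I^{[q]}`, so `R/I^{[q]}` has Krull dimension at most zero, and it is
finitely generated as a `k`-algebra.
-/

section Homogeneous

variable {ιA ιM σA σM A M : Type*} [DecidableEq ιM] [Semiring A] [AddCommMonoid M] [Module A M]
  [SetLike σM M] [AddSubmonoidClass σM M] (ℳ : ιM → σM) [DirectSum.Decomposition ℳ]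

theorem decompose_mem_of_mem {N : Submodule A M} {x : M} (hxN : x ∈ N) {j : ιM} (hx : x ∈ ℳ j)
    (i : ιM) : (DirectSum.decompose ℳ x i : M) ∈ N := by
  rw [DirectSum.decompose_of_mem ℳ hx, DirectSum.coe_of_apply]
  split_ifs
  exacts [hxN, N.zero_mem]

theorem isHomogeneous_ideal_smul [DecidableEq ιA] [AddMonoid ιA] [SetLike σA A]
    [AddSubmonoidClass σA A] (𝒜 : ιA → σA) [GradedRing 𝒜] [VAdd ιA ιM] [SetLike.GradedSMul 𝒜 ℳ]
    {J : Ideal A} (hJ : J.IsHomogeneous 𝒜) {N : Submodule A M} (hN : N.IsHomogeneous ℳ) :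
    (J • N).IsHomogeneous ℳ := by
  classical
  intro i x hx
  induction hx using Submodule.smul_induction_on' with
  | smul r hr x hx =>
    rw [← DirectSum.sum_support_decompose 𝒜 r, ← DirectSum.sum_support_decompose ℳ x,
      Finset.sum_smul_sum]
    simp only [DirectSum.decompose_sum, DirectSum.sum_apply, AddSubmonoidClass.coe_finsetSum]
    exact sum_mem fun a _ => sum_mem fun b _ =>
      decompose_mem_of_mem ℳ (Submodule.smul_mem_smul (hJ a hr) (hN b hx))
        (SetLike.GradedSMul.smul_mem (SetLike.coe_mem _) (SetLike.coe_mem _)) i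
  | add x _ y _ hx hy =>
    rw [DirectSum.decompose_add, DirectSum.add_apply, AddMemClass.coe_add]
    exact add_mem hx hy

theorem iSupIndep_map_of_isHomogeneous_ker {k V W ι : Type*} [DecidableEq ι] [Ring k]
    [AddCommGroup V] [Module k V] [AddCommGroup W] [Module k W] (𝒱 : ι → Submodule k V)
    [DirectSum.Decomposition 𝒱] {f : V →ₗ[k] W} (hf : (LinearMap.ker f).IsHomogeneous 𝒱) :
    iSupIndep fun j => (𝒱 j).map f := by
  rw [iSupIndep_def]
  intro j
  rw [Submodule.disjoint_def]
  simp only [← Submodule.map_iSup]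
  rintro _ ⟨x, hx, rfl⟩ ⟨y, hy, hxy⟩
  have hyj : (DirectSum.decompose 𝒱 y j : V) = 0 := by
    have hle : (⨆ (i) (_ : i ≠ j), 𝒱 i) ≤ LinearMap.ker
        (DirectSum.component k _ _ j ∘ₗ (DirectSum.decomposeLinearEquiv 𝒱).toLinearMap) :=
      iSup₂_le fun i hij z hz => Subtype.ext (DirectSum.decompose_of_mem_ne 𝒱 hz hij)
    exact congrArg Subtype.val (hle hy)
  have hker : x - y ∈ LinearMap.ker f := by rw [LinearMap.mem_ker, map_sub, hxy, sub_self]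
  simpa [DirectSum.decompose_of_mem_same 𝒱 hx, hyj] using hf j hker

end Homogeneous

section BracketPow

variable {R : Type*} [CommRing R]

theorem bracketPow_eq_map_iterateFrobenius (p n : ℕ) [ExpChar R p] (I : Ideal R) :
    bracketPow I (p ^ n) = I.map (iterateFrobenius R p n) := rfl

theorem isHomogeneous_bracketPow {ι σ : Type*} [DecidableEq ι] [AddCommMonoid ι] [SetLike σ R]
    [AddSubmonoidClass σ R] (𝒜 : ι → σ) [GradedRing 𝒜] (p n : ℕ) [ExpChar R p] {I : Ideal R}
    (hI : I.IsHomogeneous 𝒜) : (bracketPow I (p ^ n)).IsHomogeneous 𝒜 := by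
  obtain ⟨S, rfl⟩ := (Ideal.IsHomogeneous.iff_exists 𝒜 I).1 hI
  rw [bracketPow_eq_map_iterateFrobenius, Ideal.map_span]
  refine Ideal.homogeneous_span 𝒜 _ ?_
  rintro _ ⟨_, ⟨⟨_, i, hx⟩, -, rfl⟩, rfl⟩
  exact ⟨p ^ n • i, SetLike.pow_mem_graded _ hx⟩

theorem le_radical_bracketPow (I : Ideal R) (q : ℕ) : I ≤ (bracketPow I q).radical :=
  fun x hx => ⟨q, Ideal.subset_span ⟨x, hx, rfl⟩⟩

theorem ringKrullDim_quotient_le_of_le_radical {I J : Ideal R} (h : I ≤ J.radical) :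
    ringKrullDim (R ⧸ J) ≤ ringKrullDim (R ⧸ I) := by
  have hJI : PrimeSpectrum.zeroLocus (J : Set R) ⊆ PrimeSpectrum.zeroLocus (I : Set R) := by
    rw [← PrimeSpectrum.zeroLocus_radical J]
    exact PrimeSpectrum.zeroLocus_anti_mono h
  rw [ringKrullDim_quotient, ringKrullDim_quotient]
  exact Order.krullDim_le_of_strictMono (Set.inclusion hJI) fun _ _ h => h

variable (k : Type*) [CommRing k] [Algebra k R]

theorem finite_quotient_of_le_radical [IsArtinianRing k] [Algebra.FiniteType k R] {I J : Ideal R}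
    (hI : IsFiniteLength R (R ⧸ I)) (h : I ≤ J.radical) : Module.Finite k (R ⧸ J) := by
  have : IsArtinian R (R ⧸ I) := (isFiniteLength_iff_isNoetherian_isArtinian.1 hI).2
  have : IsArtinianRing (R ⧸ I) := isArtinian_of_tower R this
  rw [Module.finite_iff_krullDimLE_zero, Ring.krullDimLE_iff]
  exact (ringKrullDim_quotient_le_of_le_radical h).trans (Ring.krullDimLE_iff.1 inferInstance)

theorem finite_quotient_smul_top (J : Ideal R) [Module.Finite k (R ⧸ J)] (M : Type*)
    [AddCommGroup M] [Module R M] [Module k M] [IsScalarTower k R M] [Module.Finite R M] :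
    Module.Finite k (M ⧸ (J • ⊤ : Submodule R M)) := by
  have : Module.Finite (R ⧸ J) (M ⧸ (J • ⊤ : Submodule R M)) :=
    Module.Finite.of_restrictScalars_finite R _ _
  exact Module.Finite.trans (R ⧸ J) _

end BracketPow

section Vitali

open scoped Topology

variable {ι E : Type*} [NormedAddCommGroup E] [NormedSpace ℂ E] {f : ι → ℂ → E} {g : ℂ → E}
  {U : Set ℂ} {l : Filter ι}

theorem equicontinuousAt_of_eventually_norm_le {z₀ : ℂ} {C : ℝ}
    (hf : ∀ᶠ z in 𝓝 z₀, ∀ i, DifferentiableAt ℂ (f i) z)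
    (hC : ∀ᶠ z in 𝓝 z₀, ∀ i, ‖f i z‖ ≤ C) : EquicontinuousAt f z₀ := by
  obtain ⟨r, hr, hball⟩ := Metric.eventually_nhds_iff_ball.1 (hf.and hC)
  refine Metric.equicontinuousAt_of_continuity_modulus (fun z => 2 * C / r * dist z z₀) ?_ f ?_
  · have : Continuous fun z => 2 * C / r * dist z z₀ := by fun_prop
    simpa using this.tendsto z₀
  · filter_upwards [Metric.ball_mem_nhds z₀ hr] with z hz i
    rw [dist_comm]
    refine Complex.dist_le_div_mul_dist_of_mapsTo_ball
      (fun w hw => ((hball w hw).1 i).differentiableWithinAt) (fun w hw => ?_) hz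
    calc dist (f i w) (f i z₀) ≤ ‖f i w‖ + ‖f i z₀‖ := dist_le_norm_add_norm _ _
      _ ≤ C + C := add_le_add ((hball w hw).2 i) ((hball z₀ (Metric.mem_ball_self hr)).2 i)
      _ = 2 * C := (two_mul C).symm

theorem tendstoLocallyUniformlyOn_of_locally_bounded (hU : IsOpen U)
    (hf : ∀ i, DifferentiableOn ℂ (f i) U)
    (hbdd : ∀ z ∈ U, ∃ C, ∀ᶠ w in 𝓝 z, ∀ i, ‖f i w‖ ≤ C)
    (hlim : ∀ z ∈ U, Tendsto (f · z) l (𝓝 (g z))) : TendstoLocallyUniformlyOn f g l U := by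
  have hequi : ∀ z ∈ U, EquicontinuousAt f z := fun z hz => by
    obtain ⟨C, hC⟩ := hbdd z hz
    refine equicontinuousAt_of_eventually_norm_le ?_ hC
    filter_upwards [hU.mem_nhds hz] with w hw i using (hf i).differentiableAt (hU.mem_nhds hw)
  rw [tendstoLocallyUniformlyOn_iff_forall_isCompact hU]
  intro K hKU hK
  have h := (EquicontinuousOn.tendsto_uniformOnFun_iff_pi' (F := f) (𝔖 := {K}) (by simpa)
    (by rintro _ rfl z hz; exact (hequi z (hKU hz)).equicontinuousWithinAt _) l g).2
    (tendsto_pi_nhds.2 fun z => hlim z (hKU (by simpa using z.2)))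
  exact UniformOnFun.tendsto_iff_tendstoUniformlyOn.1 h K rfl

theorem tendstoLocallyUniformlyOn_iteratedDeriv [CompleteSpace E] (hU : IsOpen U)
    (hf : ∀ i, DifferentiableOn ℂ (f i) U)
    (hlim : TendstoLocallyUniformlyOn f g l U) (m : ℕ) :
    TendstoLocallyUniformlyOn (fun i => iteratedDeriv m (f i)) (iteratedDeriv m g) l U := by
  induction m generalizing f g with
  | zero => simpa only [iteratedDeriv_zero] using hlim
  | succ m ih =>
    simp only [iteratedDeriv_succ']
    exact ih (fun i => (hf i).deriv hU) (hlim.deriv (Eventually.of_forall hf) hU)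

end Vitali

section MomentGeneratingFunction

open ProbabilityTheory MeasureTheory
open scoped Topology

theorem mgf_le_add_of_mem_Icc {Ω : Type*} [MeasurableSpace Ω] {μ : Measure Ω} {X : Ω → ℝ}
    {a b t : ℝ} (ha : a ∈ integrableExpSet X μ) (hb : b ∈ integrableExpSet X μ)
    (ht : t ∈ Set.Icc a b) :
    mgf X μ t ≤ mgf X μ a + mgf X μ b := by
  rw [mgf, mgf, mgf, ← integral_add ha hb]
  refine integral_mono (integrable_exp_mul_of_le_of_le ha hb ht.1 ht.2) (ha.add hb) fun ω => ?_
  rcases le_total 0 (X ω) with hX | hX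
  · exact (Real.exp_le_exp.2 (mul_le_mul_of_nonneg_right ht.2 hX)).trans
      (le_add_of_nonneg_left (Real.exp_nonneg _))
  · exact (Real.exp_le_exp.2 (mul_le_mul_of_nonpos_right ht.1 hX)).trans
      (le_add_of_nonneg_right (Real.exp_nonneg _))

theorem differentiableOn_complexMGF_of_subset_integrableExpSet {Ω : Type*}
    [MeasurableSpace Ω] {μ : Measure Ω} {X : Ω → ℝ} {S : Set ℝ} (hS : IsOpen S)
    (hint : S ⊆ integrableExpSet X μ) : DifferentiableOn ℂ (complexMGF X μ) {z | z.re ∈ S} :=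
  differentiableOn_complexMGF.mono fun _ hz => interior_maximal hint hS hz

theorem complexMGF_locally_bounded {ι : Type*} {Ω : ι → Type*} [∀ n, MeasurableSpace (Ω n)]
    {μ : ∀ n, Measure (Ω n)} {X : ∀ n, Ω n → ℝ} {S : Set ℝ} (hS : IsOpen S)
    (hint : ∀ n, S ⊆ integrableExpSet (X n) (μ n))
    (hbdd : ∀ t ∈ S, BddAbove (Set.range fun n => mgf (X n) (μ n) t)) {z : ℂ} (hz : z.re ∈ S) :
    ∃ C, ∀ᶠ w in 𝓝 z, ∀ n, ‖complexMGF (X n) (μ n) w‖ ≤ C := by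
  obtain ⟨a, b, hzab, hab, habS⟩ := exists_Icc_mem_subset_of_mem_nhds (hS.mem_nhds hz)
  have hle := hzab.1.trans hzab.2
  have haS := habS (Set.left_mem_Icc.2 hle)
  have hbS := habS (Set.right_mem_Icc.2 hle)
  obtain ⟨A, hA⟩ := hbdd a haS
  obtain ⟨B, hB⟩ := hbdd b hbS
  refine ⟨A + B, ?_⟩
  filter_upwards [Complex.continuous_re.continuousAt.preimage_mem_nhds hab] with w hw n
  calc ‖complexMGF (X n) (μ n) w‖ ≤ mgf (X n) (μ n) w.re := norm_complexMGF_le_mgf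
    _ ≤ mgf (X n) (μ n) a + mgf (X n) (μ n) b := mgf_le_add_of_mem_Icc (hint n haS) (hint n hbS) hw
    _ ≤ A + B := add_le_add (hA ⟨n, rfl⟩) (hB ⟨n, rfl⟩)

variable {Ω : ℕ → Type*} [∀ n, MeasurableSpace (Ω n)] {μ : ∀ n, Measure (Ω n)}
  {X : ∀ n, Ω n → ℝ} {S : Set ℝ} {Φ : ℂ → ℂ}

theorem tendstoLocallyUniformlyOn_complexMGF (hS : IsOpen S)
    (hint : ∀ n, S ⊆ integrableExpSet (X n) (μ n))
    (hlim : ∀ z : ℂ, z.re ∈ S → Tendsto (fun n => complexMGF (X n) (μ n) z) atTop (𝓝 (Φ z))) :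
    TendstoLocallyUniformlyOn (fun n => complexMGF (X n) (μ n)) Φ atTop {z | z.re ∈ S} := by
  refine tendstoLocallyUniformlyOn_of_locally_bounded (hS.preimage Complex.continuous_re)
    (fun n => differentiableOn_complexMGF_of_subset_integrableExpSet hS (hint n))
    (fun z hz => complexMGF_locally_bounded hS hint (fun t ht => ?_) hz) hlim
  refine (hlim t ht).norm.bddAbove_range.range_mono _ fun n => ?_
  rw [complexMGF_ofReal, Complex.norm_real]
  exact le_abs_self _

theorem differentiableOn_of_tendsto_complexMGF (hS : IsOpen S)
    (hint : ∀ n, S ⊆ integrableExpSet (X n) (μ n))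
    (hlim : ∀ z : ℂ, z.re ∈ S → Tendsto (fun n => complexMGF (X n) (μ n) z) atTop (𝓝 (Φ z))) :
    DifferentiableOn ℂ Φ {z | z.re ∈ S} :=
  (tendstoLocallyUniformlyOn_complexMGF hS hint hlim).differentiableOn
    (Eventually.of_forall fun n =>
      differentiableOn_complexMGF_of_subset_integrableExpSet hS (hint n))
    (hS.preimage Complex.continuous_re)

theorem tendsto_integral_pow_mul_exp_of_tendsto_complexMGF (hS : IsOpen S)
    (hint : ∀ n, S ⊆ integrableExpSet (X n) (μ n))
    (hlim : ∀ z : ℂ, z.re ∈ S → Tendsto (fun n => complexMGF (X n) (μ n) z) atTop (𝓝 (Φ z)))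
    {z : ℂ} (hz : z.re ∈ S) (m : ℕ) :
    Tendsto (fun n => ∫ ω, (X n ω : ℂ) ^ m * cexp (z * X n ω) ∂μ n) atTop
      (𝓝 (iteratedDeriv m Φ z)) := by
  have hderiv := tendstoLocallyUniformlyOn_iteratedDeriv (hS.preimage Complex.continuous_re)
    (fun n => differentiableOn_complexMGF_of_subset_integrableExpSet hS (hint n))
    (tendstoLocallyUniformlyOn_complexMGF hS hint hlim) m
  refine (hderiv.tendsto_at hz).congr fun n => ?_
  exact iteratedDeriv_complexMGF (interior_maximal (hint n) hS hz) m

end MomentGeneratingFunction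

section ScaledDiracSum

open ProbabilityTheory MeasureTheory
open scoped NNReal ENNReal

/-- The measure `q^{-d} Σ_j w_j δ_{j/q}` on the line. With `q = p^n` and
`w_j = λ_k((M/I^{[p^n]}M)_j)`, it is the measure whose moment generating function at `-iy` is
`F_n(M,R,I,d)(y)`. -/
def scaledDiracSum (w : ℤ → ℕ) (q d : ℕ) : Measure ℝ :=
  Measure.sum fun j : ℤ => (((1 / q) ^ d * w j : ℝ≥0) : ℝ≥0∞) • Measure.dirac (j / q : ℝ)

theorem integral_scaledDiracSum (w : ℤ → ℕ) (q d : ℕ) (f : ℝ → ℂ) :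
    ∫ x, f x ∂scaledDiracSum w q d = (1 / (q : ℂ)) ^ d * ∑' j : ℤ, (w j : ℂ) * f (j / q) := by
  rw [scaledDiracSum, integral_sum_dirac fun j => ENNReal.coe_ne_top, ← tsum_mul_left]
  refine tsum_congr fun j => ?_
  rw [ENNReal.coe_toReal, Complex.real_smul]
  push_cast
  ring

theorem complexMGF_scaledDiracSum (w : ℤ → ℕ) (q d : ℕ) (z : ℂ) :
    complexMGF id (scaledDiracSum w q d) z =
      (1 / (q : ℂ)) ^ d * ∑' j : ℤ, (w j : ℂ) * cexp (z * (j / q)) := by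
  rw [complexMGF, integral_scaledDiracSum w q d fun x => cexp (z * (id x : ℝ))]
  push_cast [id]
  rfl

theorem integral_pow_scaledDiracSum (w : ℤ → ℕ) (q d m : ℕ) :
    ∫ x, (x : ℂ) ^ m ∂scaledDiracSum w q d =
      (1 / (q : ℂ)) ^ (d + m) * ∑' j : ℤ, (j : ℂ) ^ m * (w j : ℂ) := by
  rw [integral_scaledDiracSum w q d fun x => (x : ℂ) ^ m, pow_add, mul_assoc,
    ← tsum_mul_left (a := (1 / (q : ℂ)) ^ m)]
  congr 1
  refine tsum_congr fun j => ?_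
  push_cast
  ring

theorem integrableExpSet_scaledDiracSum {w : ℤ → ℕ} (hw : w.support.Finite) (q d : ℕ) :
    integrableExpSet id (scaledDiracSum w q d) = Set.univ := by
  refine Set.eq_univ_of_forall fun t => ?_
  refine integrable_sum_dirac (fun j => ENNReal.coe_ne_top) ?_
  refine summable_of_hasFiniteSupport (hw.subset fun j hj hwj => hj ?_)
  simp [hwj]

end ScaledDiracSum

section FrobeniusPoincare

open ProbabilityTheory
open scoped Topology

variable (k : Type*) {R M : Type*} [Field k] [CommRing R] [Algebra k R] [AddCommGroup M]
  [Module R M] [Module k M] [IsScalarTower k R M] (ℳ : ℤ → Submodule k M)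

theorem FnGen_eq_complexMGF (I : Ideal R) (p d n : ℕ) (y : ℂ) :
    FnGen k ℳ I p d n y =
      complexMGF id
        (scaledDiracSum (quotPieceDim k (R := R) ℳ (bracketPow I (p ^ n) • ⊤)) (p ^ n) d)
        (-Complex.I * y) := by
  simp only [FnGen, complexMGF_scaledDiracSum, Nat.cast_pow, mul_div_assoc]

variable [DirectSum.Decomposition ℳ]

theorem finite_support_quotPieceDim {N : Submodule R M} [Module.Finite k (M ⧸ N)]
    (hN : N.IsHomogeneous ℳ) : (Function.support (quotPieceDim k ℳ N)).Finite := by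
  have hker : (LinearMap.ker (N.mkQ.restrictScalars k)).IsHomogeneous ℳ := by
    rw [LinearMap.ker_restrictScalars, Submodule.ker_mkQ]
    exact hN
  have hfin := WellFoundedGT.finite_ne_bot_of_iSupIndep
    (iSupIndep_map_of_isHomogeneous_ker ℳ hker)
  refine hfin.subset fun j hj hbot => hj ?_
  rw [quotPieceDim, hbot, finrank_bot]

variable [Algebra.FiniteType k R] [Module.Finite R M] {ι σ : Type*} [DecidableEq ι]
  [AddCommMonoid ι] [VAdd ι ℤ] [SetLike σ R] [AddSubmonoidClass σ R] (𝒜 : ι → σ) [GradedRing 𝒜]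
  [SetLike.GradedSMul 𝒜 ℳ] (p : ℕ) [ExpChar R p] {I : Ideal R}

theorem finite_support_quotPieceDim_bracketPow (hI : I.IsHomogeneous 𝒜)
    (hIfl : IsFiniteLength R (R ⧸ I)) (n : ℕ) :
    (Function.support (quotPieceDim k (R := R) ℳ (bracketPow I (p ^ n) • ⊤))).Finite := by
  have := finite_quotient_of_le_radical k hIfl (le_radical_bracketPow I (p ^ n))
  have : Module.Finite k (M ⧸ (bracketPow I (p ^ n) • ⊤ : Submodule R M)) :=
    finite_quotient_smul_top k _ M
  exact finite_support_quotPieceDim k ℳ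
    (isHomogeneous_ideal_smul ℳ 𝒜 (isHomogeneous_bracketPow 𝒜 p n hI) fun _ _ _ => trivial)

theorem frobenius_poincare_power_series_general (hI : I.IsHomogeneous 𝒜)
    (hIfl : IsFiniteLength R (R ⧸ I)) (d : ℕ) {F : ℂ → ℂ}
    (hF : ∀ y : ℂ, Tendsto (fun n : ℕ => FnGen k ℳ I p d n y) atTop (𝓝 (F y))) :
    ∃ b : ℕ → ℂ,
      (∀ m : ℕ,
        Tendsto (fun n : ℕ => (1 / (p : ℂ) ^ n) ^ (d + m) *
            ∑' j : ℤ, (j : ℂ) ^ m *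
              (quotPieceDim k (R := R) ℳ (bracketPow I (p ^ n) • ⊤) j : ℂ))
          atTop (𝓝 (b m))) ∧
      (∀ y : ℂ,
        HasSum (fun m : ℕ => (-Complex.I) ^ m / (m.factorial : ℂ) * b m * y ^ m) (F y)) := by
  let Φ : ℂ → ℂ := fun z => F (Complex.I * z)
  have hΦ : ∀ y, Φ (-Complex.I * y) = F y := fun y => by
    simp only [Φ, ← mul_assoc, mul_neg, Complex.I_mul_I, neg_neg, one_mul]
  have hint := fun n => (integrableExpSet_scaledDiracSum
    (finite_support_quotPieceDim_bracketPow k ℳ 𝒜 p hI hIfl n) (p ^ n) d).ge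
  have hlim : ∀ z : ℂ, z.re ∈ Set.univ → Tendsto (fun n => complexMGF id
      (scaledDiracSum (quotPieceDim k (R := R) ℳ (bracketPow I (p ^ n) • ⊤)) (p ^ n) d) z)
      atTop (𝓝 (Φ z)) := fun z _ => by
    simpa only [FnGen_eq_complexMGF, ← mul_assoc, neg_mul, Complex.I_mul_I, neg_neg, one_mul]
      using hF (Complex.I * z)
  refine ⟨fun m => iteratedDeriv m Φ 0, fun m => ?_, fun y => ?_⟩
  · simpa only [zero_mul, Complex.exp_zero, mul_one, id, integral_pow_scaledDiracSum, Nat.cast_pow]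
      using tendsto_integral_pow_mul_exp_of_tendsto_complexMGF isOpen_univ hint hlim
        (Set.mem_univ (0 : ℂ).re) m
  · have hentire : Differentiable ℂ Φ := differentiableOn_univ.1
      (differentiableOn_of_tendsto_complexMGF isOpen_univ hint hlim)
    rw [← hΦ y]
    refine (Complex.hasSum_taylorSeries_of_entire hentire 0 (-Complex.I * y)).congr_fun fun m => ?_
    simp only [smul_eq_mul, sub_zero, mul_pow]
    ring

end FrobeniusPoincare

/-- **Power series expansion of the Frobenius–Poincaré function around the origin.**
If `F(M,R,I)` is the (pointwise) limit of the `F_n(M,R,I,dim M)`, then for each `m` the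
limit `b_m = lim_n p^{-n(d+m)} Σ_j j^m λ_k((M/I^{[p^n]}M)_j)` exists and
`F(M,R,I)(y) = Σ_m ((-i)^m/m!) b_m y^m` for every `y`. -/
theorem frobenius_poincare_power_series
    (k R M : Type) [Field k] [CommRing R] [Algebra k R] [Algebra.FiniteType k R]
    (p : ℕ) (hp : p.Prime) [CharP R p]
    (𝒜 : ℤ → Submodule k R) [GradedAlgebra 𝒜]
    (h𝒜neg : ∀ t : ℤ, t < 0 → 𝒜 t = ⊥)
    (h𝒜zero : ∀ x ∈ 𝒜 0, ∃ c : k, algebraMap k R c = x)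
    (I : Ideal R) (hI : Ideal.IsHomogeneous 𝒜 I) (hIfl : IsFiniteLength R (R ⧸ I))
    [AddCommGroup M] [Module R M] [Module k M] [IsScalarTower k R M] [Module.Finite R M]
    (ℳ : ℤ → Submodule k M) [DirectSum.Decomposition ℳ]
    (hℳ : ∀ (a b : ℤ), ∀ r ∈ 𝒜 a, ∀ x ∈ ℳ b, r • x ∈ ℳ (a + b))
    (d : ℕ) (hd : ringKrullDim (R ⧸ Module.annihilator R M) = d)
    (F : ℂ → ℂ)
    (hF : ∀ y : ℂ, Tendsto (fun n : ℕ => FnGen k ℳ I p d n y) atTop (nhds (F y))) :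
    ∃ b : ℕ → ℂ,
      (∀ m : ℕ,
        Tendsto (fun n : ℕ => (1 / (p : ℂ) ^ n) ^ (d + m) *
            ∑' j : ℤ, (j : ℂ) ^ m *
              (quotPieceDim k (R := R) ℳ (bracketPow I (p ^ n) • ⊤) j : ℂ))
          atTop (nhds (b m))) ∧
      (∀ y : ℂ,
        HasSum (fun m : ℕ => (-Complex.I) ^ m / (m.factorial : ℂ) * b m * y ^ m) (F y)) := by
  have : ExpChar R p := .prime hp
  have : SetLike.GradedSMul 𝒜 ℳ := ⟨fun {a b r x} hr hx => hℳ a b r hr x hx⟩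
  exact frobenius_poincare_power_series_general k ℳ 𝒜 p hI hIfl d hF

end
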